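/- For j ∈ {0,1,2} and every τ in the complex upper half plane, g_{1,j}(τ)² = E₄(τ) − 12·ρʲ·η(τ)⁸, where ρ = (−1 + i√3)/2. -/

import Mathlib

open Complex

/-- `q = exp(2πiτ)`. -/
noncomputable def qq (τ : ℂ) : ℂ := Complex.exp (2 * Real.pi * Complex.I * τ)

/-- `σ_k(n) = Σ_{d ∣ n} d^k`, as a complex number. -/
noncomputable def sigmaC (k n : ℕ) : ℂ := ∑ d ∈ n.divisors, (d : ℂ) ^ k

/-- Eisenstein series `E₂(τ) = 1 - 24 Σ_{n≥1} σ₁(n) qⁿ`. -/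
noncomputable def E₂ (τ : ℂ) : ℂ := 1 - 24 * ∑' n : ℕ, sigmaC 1 (n + 1) * qq τ ^ (n + 1)

/-- Eisenstein series `E₄(τ) = 1 + 240 Σ_{n≥1} σ₃(n) qⁿ`. -/
noncomputable def E₄ (τ : ℂ) : ℂ := 1 + 240 * ∑' n : ℕ, sigmaC 3 (n + 1) * qq τ ^ (n + 1)

/-- Eisenstein series `E₆(τ) = 1 - 504 Σ_{n≥1} σ₅(n) qⁿ`. -/
noncomputable def E₆ (τ : ℂ) : ℂ := 1 - 504 * ∑' n : ℕ, sigmaC 5 (n + 1) * qq τ ^ (n + 1)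

/-- Dedekind eta function `η(τ) = exp(πiτ/12) ∏_{n≥1} (1 - qⁿ)`. -/
noncomputable def η (τ : ℂ) : ℂ :=
  Complex.exp (Real.pi * Complex.I * τ / 12) * ∏' n : ℕ, (1 - qq τ ^ (n + 1))

/-- Theta function `θ(τ) = Σ_{n ∈ ℤ} q^{n²}`. -/
noncomputable def θ (τ : ℂ) : ℂ := ∑' n : ℤ, qq τ ^ (n ^ 2)

/-- The character `χ₋₄`: `χ₋₄(d) = 1, -1, 0` according as `d ≡ 1, 3, 0/2 (mod 4)`. -/
noncomputable def χ₄ (d : ℕ) : ℂ := if d % 4 = 1 then 1 else if d % 4 = 3 then -1 else 0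

/-- The character `χ₋₃`: `χ₋₃(d) = 1, -1, 0` according as `d ≡ 1, 2, 0 (mod 3)`. -/
noncomputable def χ₃ (d : ℕ) : ℂ := if d % 3 = 1 then 1 else if d % 3 = 2 then -1 else 0

/-- `E_{1,-4}(τ) = 1/4 + Σ_{n≥1} (Σ_{d∣n} χ₋₄(d)) qⁿ`. -/
noncomputable def E₁₄ (τ : ℂ) : ℂ :=
  1 / 4 + ∑' n : ℕ, (∑ d ∈ (n + 1).divisors, χ₄ d) * qq τ ^ (n + 1)

/-- `E_{1,-3}(τ) = 1/6 + Σ_{n≥1} (Σ_{d∣n} χ₋₃(d)) qⁿ`. -/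
noncomputable def E₁₃ (τ : ℂ) : ℂ :=
  1 / 6 + ∑' n : ℕ, (∑ d ∈ (n + 1).divisors, χ₃ d) * qq τ ^ (n + 1)

/-- `E_{2,2}(τ) = 2E₂(2τ) - E₂(τ)`. -/
noncomputable def E₂₂ (τ : ℂ) : ℂ := 2 * E₂ (2 * τ) - E₂ τ

/-- `E_{2,4}(τ) = (4E₄(2τ) - E₄(τ))/3`. -/
noncomputable def E₂₄ (τ : ℂ) : ℂ := (4 * E₄ (2 * τ) - E₄ τ) / 3

/-- `E_{3,2}(τ) = (3E₂(3τ) - E₂(τ))/2`. -/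
noncomputable def E₃₂ (τ : ℂ) : ℂ := (3 * E₂ (3 * τ) - E₂ τ) / 2

/-- `E_{3,4}(τ) = (9E₄(3τ) - E₄(τ))/8`. -/
noncomputable def E₃₄ (τ : ℂ) : ℂ := (9 * E₄ (3 * τ) - E₄ τ) / 8

/-- `E_{4,2}(τ) = (4E₂(4τ) - E₂(τ))/3`. -/
noncomputable def E₄₂ (τ : ℂ) : ℂ := (4 * E₂ (4 * τ) - E₂ τ) / 3

/-- `E'_{4,2}(τ) = 4E₂(4τ) - 4E₂(2τ) + E₂(τ)`. -/
noncomputable def E₄₂' (τ : ℂ) : ℂ := 4 * E₂ (4 * τ) - 4 * E₂ (2 * τ) + E₂ τ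

/-- `f_{1,j}(τ) = 2E₂(τ) - ((3+(-1)ʲi√3)/6)E₂(τ/2) - ((3-(-1)ʲi√3)/6)E₂((τ+1)/2)`. -/
noncomputable def f₁ (j : ℕ) (τ : ℂ) : ℂ :=
  2 * E₂ τ - ((3 + (-1 : ℂ) ^ j * Complex.I * Real.sqrt 3) / 6) * E₂ (τ / 2)
    - ((3 - (-1 : ℂ) ^ j * Complex.I * Real.sqrt 3) / 6) * E₂ ((τ + 1) / 2)

/-- `g_{1,j}(τ) = (3/2)E₂(τ) - (1/4) Σ_{0≤m≤2, m≢j (mod 3)} E₂((τ+m)/3)`. -/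
noncomputable def g₁ (j : ℕ) (τ : ℂ) : ℂ :=
  (3 / 2) * E₂ τ -
    (1 / 4) * ∑ m ∈ (Finset.range 3).filter (fun m => ¬ m % 3 = j % 3), E₂ ((τ + m) / 3)

/-- `f_{2,j}(τ) = 4E_{1,-4}(τ) + (-1)ʲ·2i·(E_{1,-4}(τ/2) - E_{1,-4}((τ+1)/2))`. -/
noncomputable def f₂ (j : ℕ) (τ : ℂ) : ℂ :=
  4 * E₁₄ τ + (-1 : ℂ) ^ j * 2 * Complex.I * (E₁₄ (τ / 2) - E₁₄ ((τ + 1) / 2))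

/-- `f_{3,j}(τ) = 6E_{1,-3}(2τ) + (-1)ʲ·i√3·(E_{1,-3}(τ/2) - E_{1,-3}((τ+1)/2))`. -/
noncomputable def f₃ (j : ℕ) (τ : ℂ) : ℂ :=
  6 * E₁₃ (2 * τ) +
    (-1 : ℂ) ^ j * Complex.I * Real.sqrt 3 * (E₁₃ (τ / 2) - E₁₃ ((τ + 1) / 2))

/-- `f_{4,j}(τ) = θ(τ/2 - (-1)ʲ/4)`. -/
noncomputable def f₄ (j : ℕ) (τ : ℂ) : ℂ := θ (τ / 2 - (-1 : ℂ) ^ j / 4)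

/-- `g_{4,j}(τ) = 2θ(2τ)² - θ((τ+j)/2)²`. -/
noncomputable def g₄ (j : ℕ) (τ : ℂ) : ℂ := 2 * θ (2 * τ) ^ 2 - θ ((τ + j) / 2) ^ 2

/-- `E_{3,-3,1}(τ) = -1/9 + Σ_{n≥1} (Σ_{d∣n} d²χ₋₃(d)) qⁿ`. -/
noncomputable def E₃₃₁ (τ : ℂ) : ℂ :=
  -(1 / 9) + ∑' n : ℕ, (∑ d ∈ (n + 1).divisors, (d : ℂ) ^ 2 * χ₃ d) * qq τ ^ (n + 1)

/-- `E_{3,1,-3}(τ) = Σ_{n≥1} (Σ_{d∣n} d²χ₋₃(n/d)) qⁿ`. -/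
noncomputable def E₃₁₃ (τ : ℂ) : ℂ :=
  ∑' n : ℕ, (∑ d ∈ (n + 1).divisors, (d : ℂ) ^ 2 * χ₃ ((n + 1) / d)) * qq τ ^ (n + 1)

/-!
The translates `τ ↦ h(τ + j)` of `h = (g_{1,0}² - E₄) / η⁸` are `ρ⁻ʲ (g_{1,j}² - E₄) / η⁸`, so the
three identities together say that `h` is the constant `-12`. Now `h` has period `3` and tends to
`-12` at `i∞`, since in `t = exp(2πiτ/3)` the numerator is `-12 t + O(t²)` and `η⁸ = t + O(t²)`.
Each translate is invariant under `τ ↦ -1/τ`: the Hecke relation `T₃ E₂ = 4 E₂` makes `g_{1,j}` a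
multiple of the sum of `3 E₂(3τ) - E₂(τ)` and one `E₂((τ + m)/3)/3 - E₂(τ)`, and `τ ↦ -1/τ` permutes
these four weight two forms, whose sum is zero, in two pairs, so that `g_{1,j}` changes at most by
a sign. Hence the coefficients of `(X - h(τ)) (X - h(τ + 1)) (X - h(τ + 2))` have level one and are
bounded at `i∞`; they are constant, and so is `h`.
-/

open Filter Topology Finset
open UpperHalfPlane hiding I
open scoped MatrixGroups

local notation "I∞" => comap Complex.im atTop
local notation "ℍₒ" => upperHalfPlaneSet

section HalfPlane

lemma coe_modular_S_smul (z : ℍ) : ((ModularGroup.S • z : ℍ) : ℂ) = -1 / z := by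
  rw [modular_S_smul, coe_mk, inv_neg, neg_div, one_div]

lemma ne_zero_of_mem_upperHalfPlaneSet {τ : ℂ} (hτ : τ ∈ ℍₒ) : τ ≠ 0 :=
  ne_zero (⟨τ, hτ⟩ : ℍ)

lemma add_real_mem_upperHalfPlaneSet {τ : ℂ} (hτ : τ ∈ ℍₒ) (x : ℝ) : τ + x ∈ ℍₒ := by
  simpa [upperHalfPlaneSet] using hτ

lemma real_mul_mem_upperHalfPlaneSet {τ : ℂ} (hτ : τ ∈ ℍₒ) {x : ℝ} (hx : 0 < x) : x * τ ∈ ℍₒ := by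
  simpa [upperHalfPlaneSet, hx] using hτ

lemma neg_one_div_mem_upperHalfPlaneSet {τ : ℂ} (hτ : τ ∈ ℍₒ) : -1 / τ ∈ ℍₒ := by
  rw [← coe_modular_S_smul ⟨τ, hτ⟩]
  exact im_pos _

lemma add_div_natCast_mem_upperHalfPlaneSet {τ : ℂ} (hτ : τ ∈ ℍₒ) (x : ℝ) (N : ℕ) [NeZero N] :
    (τ + x) / N ∈ ℍₒ := by
  have hN : (0 : ℝ) < (N : ℝ)⁻¹ := inv_pos.mpr (Nat.cast_pos'.mpr (NeZero.pos N))
  simpa [div_eq_inv_mul] using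
    real_mul_mem_upperHalfPlaneSet (add_real_mem_upperHalfPlaneSet hτ x) hN

lemma eventually_mem_upperHalfPlaneSet : ∀ᶠ τ : ℂ in I∞, τ ∈ ℍₒ :=
  tendsto_comap.eventually_gt_atTop 0

lemma tendsto_add_real_comap_im_atTop (x : ℝ) : Tendsto (fun τ : ℂ ↦ τ + x) I∞ I∞ :=
  tendsto_comap_iff.mpr <| tendsto_comap.congr fun τ ↦ by simp

lemma tendsto_real_mul_comap_im_atTop {x : ℝ} (hx : 0 < x) :
    Tendsto (fun τ : ℂ ↦ x * τ) I∞ I∞ :=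
  tendsto_comap_iff.mpr <| (tendsto_comap.const_mul_atTop hx).congr fun τ ↦ by simp

lemma tendsto_add_div_natCast_comap_im_atTop (x : ℝ) (N : ℕ) [NeZero N] :
    Tendsto (fun τ : ℂ ↦ (τ + x) / N) I∞ I∞ := by
  have hN : (0 : ℝ) < (N : ℝ)⁻¹ := inv_pos.mpr (Nat.cast_pos'.mpr (NeZero.pos N))
  simpa [div_eq_inv_mul, Function.comp_def] using
    (tendsto_real_mul_comap_im_atTop hN).comp (tendsto_add_real_comap_im_atTop x)

end HalfPlane

section LevelOne

open scoped ModularForm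

variable {f : ℂ → ℂ} {k : ℤ}

lemma slash_T_eq_self (hT : ∀ τ ∈ ℍₒ, f (τ + 1) = f τ) :
    (fun z : ℍ ↦ f z) ∣[k] ModularGroup.T = fun z : ℍ ↦ f z := by
  ext z
  have hdenom : denom (ModularGroup.T : GL (Fin 2) ℝ) z = 1 := by
    rw [ModularGroup.denom_apply]
    simp [ModularGroup.T]
  rw [ModularForm.SL_slash_apply, hdenom, one_zpow, mul_one, modular_T_smul,
    UpperHalfPlane.coe_vadd, ofReal_one, add_comm, hT z z.im_pos]

lemma slash_S_eq_self (hS : ∀ τ ∈ ℍₒ, f (-1 / τ) = τ ^ k * f τ) :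
    (fun z : ℍ ↦ f z) ∣[k] ModularGroup.S = fun z : ℍ ↦ f z := by
  ext z
  rw [ModularForm.SL_slash_apply, ModularGroup.denom_S, coe_modular_S_smul, hS z z.im_pos,
    mul_right_comm, ← zpow_add₀ z.ne_zero, add_neg_cancel, zpow_zero, one_mul]

/-- The level one cusp form given by a holomorphic function on the upper half plane which transforms
with weight `k` under `τ ↦ τ + 1` and `τ ↦ -1/τ` and vanishes at `i∞`. -/
noncomputable def levelOneCuspForm (hf : DifferentiableOn ℂ f ℍₒ)
    (hT : ∀ τ ∈ ℍₒ, f (τ + 1) = f τ) (hS : ∀ τ ∈ ℍₒ, f (-1 / τ) = τ ^ k * f τ)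
    (h0 : Tendsto f I∞ (𝓝 0)) : CuspForm 𝒮ℒ k where
  toFun z := f z
  slash_action_eq' := by
    rintro _ ⟨γ, rfl⟩
    exact SlashInvariantForm.slash_action_generators_SL2Z (slash_S_eq_self hS)
      (slash_T_eq_self hT) γ
  holo' := UpperHalfPlane.mdifferentiable_iff.mpr <| hf.congr fun τ hτ ↦ by
    simp [ofComplex_apply_of_im_pos hτ]
  zero_at_cusps' hc := by
    rw [Subgroup.IsArithmetic.isCusp_iff_isCusp_SL2Z] at hc
    refine (OnePoint.isZeroAt_iff_forall_SL2Z hc).mpr fun γ _ ↦ ?_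
    rw [SlashInvariantForm.slash_action_generators_SL2Z (slash_S_eq_self hS)
      (slash_T_eq_self hT)]
    exact h0.comp tendsto_coe_atImInfty

theorem eq_zero_of_levelOne_of_weight_lt_twelve (hk : k < 12) (hf : DifferentiableOn ℂ f ℍₒ)
    (hT : ∀ τ ∈ ℍₒ, f (τ + 1) = f τ) (hS : ∀ τ ∈ ℍₒ, f (-1 / τ) = τ ^ k * f τ)
    (h0 : Tendsto f I∞ (𝓝 0)) : ∀ τ ∈ ℍₒ, f τ = 0 := fun τ hτ ↦ by
  have hzero := rank_zero_iff_forall_zero.mp (CuspForm.rank_eq_zero_of_weight_lt_twelve hk)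
    (levelOneCuspForm hf hT hS h0)
  exact DFunLike.congr_fun hzero ⟨τ, hτ⟩

/- For every `X`, the product `∏ (X - h (τ + n))` over `n < N` has level one and weight zero, so it
is constant, equal to its limit `(X - c) ^ N`; at `X = h τ` it vanishes. -/
theorem eq_of_tendsto_of_translates_neg_inv {h : ℂ → ℂ} {c : ℂ} {N : ℕ} (hN : N ≠ 0)
    (hd : DifferentiableOn ℂ h ℍₒ) (hT : ∀ τ ∈ ℍₒ, h (τ + N) = h τ)
    (hS : ∀ n : ℕ, ∀ τ ∈ ℍₒ, h (-1 / τ + n) = h (τ + n)) (hc : Tendsto h I∞ (𝓝 c)) :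
    ∀ τ ∈ ℍₒ, h τ = c := by
  obtain ⟨M, rfl⟩ := Nat.exists_eq_succ_of_ne_zero hN
  intro τ hτ
  have hprod (X : ℂ) : ∏ n ∈ range (M + 1), (X - h (τ + n)) - (X - c) ^ (M + 1) = 0 := by
    refine eq_zero_of_levelOne_of_weight_lt_twelve (k := 0)
      (f := fun τ ↦ ∏ n ∈ range (M + 1), (X - h (τ + n)) - (X - c) ^ (M + 1)) (by norm_num)
      ?_ (fun τ hτ ↦ ?_) (fun τ hτ ↦ ?_) ?_ τ hτ
    · refine (DifferentiableOn.fun_finsetProd fun n _ ↦ ?_).sub_const _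
      exact (hd.comp (by fun_prop) fun τ hτ ↦ add_real_mem_upperHalfPlaneSet hτ n).const_sub X
    · have hshift (n : ℕ) : τ + 1 + n = τ + (n + 1 : ℕ) := by push_cast; ring
      simp only [hshift]
      rw [prod_range_succ, prod_range_succ', hT τ hτ, Nat.cast_zero, add_zero]
    · simp only [hS _ τ hτ, zpow_zero, one_mul]
    · have hlim : Tendsto (fun τ ↦ ∏ n ∈ range (M + 1), (X - h (τ + n))) I∞
          (𝓝 (∏ _n ∈ range (M + 1), (X - c))) := tendsto_finsetProd _ fun n _ ↦
        (hc.comp (tendsto_add_real_comap_im_atTop n)).const_sub X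
      simpa using hlim.sub_const ((X - c) ^ (M + 1))
  have hvanish : ∏ n ∈ range (M + 1), (h τ - h (τ + n)) = 0 :=
    prod_eq_zero (mem_range.mpr M.succ_pos) (by simp)
  have hpow := hprod (h τ)
  rw [hvanish, zero_sub, neg_eq_zero] at hpow
  exact sub_eq_zero.mp (eq_zero_of_pow_eq_zero hpow)

end LevelOne

lemma hasDerivAt_tsum_mul_pow {𝕜 : Type*} [NontriviallyNormedField 𝕜] [CompleteSpace 𝕜] {a : ℕ → 𝕜}
    (ha : ∀ᶠ q in 𝓝 0, Summable fun n ↦ a n * q ^ n) :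
    HasDerivAt (fun q ↦ ∑' n, a n * q ^ n) (a 1) 0 := by
  have hseries : HasFPowerSeriesAt (fun q ↦ ∑' n, a n * q ^ n)
      (FormalMultilinearSeries.ofScalars 𝕜 a) 0 := hasFPowerSeriesAt_iff.mpr <| by
    filter_upwards [ha] with q hq
    simpa [mul_comm] using hq.hasSum
  simpa using hseries.hasDerivAt

section DivisorSums

/-- The generating series `∑_{n ≥ 1} σ_k(n) qⁿ` of the divisor sums, as a function of `q`. -/
noncomputable def sigmaSeries (k : ℕ) (q : ℂ) : ℂ := ∑' n : ℕ, sigmaC k (n + 1) * q ^ (n + 1)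

lemma norm_sigmaC_le (k n : ℕ) : ‖sigmaC k n‖ ≤ (n : ℝ) ^ (k + 1) := by
  have hσ : sigmaC k n = (ArithmeticFunction.sigma k n : ℂ) := by
    simp [sigmaC, ArithmeticFunction.sigma_apply]
  rw [hσ, norm_natCast]
  exact_mod_cast ArithmeticFunction.sigma_le_pow_succ k n

lemma summable_sigmaC_mul_pow (k : ℕ) {q : ℂ} (hq : ‖q‖ < 1) :
    Summable fun n : ℕ ↦ sigmaC k n * q ^ n := by
  refine .of_norm_bounded (summable_norm_pow_mul_geometric_of_norm_lt_one (k + 1) hq) fun n ↦ ?_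
  rw [norm_mul, norm_mul, norm_pow _ (k + 1), norm_natCast]
  gcongr
  exact norm_sigmaC_le k n

lemma sigmaSeries_eq_tsum (k : ℕ) {q : ℂ} (hq : ‖q‖ < 1) :
    sigmaSeries k q = ∑' n : ℕ, sigmaC k n * q ^ n := by
  rw [(summable_sigmaC_mul_pow k hq).tsum_eq_zero_add, sigmaSeries]
  simp [sigmaC]

lemma sigmaSeries_zero (k : ℕ) : sigmaSeries k 0 = 0 := by
  simp [sigmaSeries]

lemma hasDerivAt_sigmaSeries (k : ℕ) : HasDerivAt (sigmaSeries k) 1 0 := by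
  have hball : ∀ᶠ q : ℂ in 𝓝 0, ‖q‖ < 1 := by
    simpa [Metric.ball, Filter.Eventually] using Metric.ball_mem_nhds (0 : ℂ) one_pos
  have hderiv := hasDerivAt_tsum_mul_pow (hball.mono fun q ↦ summable_sigmaC_mul_pow k)
  rw [show sigmaC k 1 = 1 by simp [sigmaC]] at hderiv
  exact hderiv.congr_of_eventuallyEq (hball.mono fun q ↦ sigmaSeries_eq_tsum k)

end DivisorSums

section Nome

lemma qq_ne_zero (τ : ℂ) : qq τ ≠ 0 := exp_ne_zero _

lemma qq_periodic : Function.Periodic qq 1 := fun τ ↦ by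
  rw [qq, mul_add, mul_one, exp_add, exp_two_pi_mul_I, mul_one, qq]

lemma qq_add (τ w : ℂ) : qq (τ + w) = qq τ * qq w := by
  simp only [qq, mul_add, exp_add]

lemma qq_natCast_mul (n : ℕ) (τ : ℂ) : qq (n * τ) = qq τ ^ n := by
  rw [qq, qq, ← exp_nat_mul, mul_left_comm]

lemma qq_div_natCast_pow (N : ℕ) [NeZero N] (τ : ℂ) : qq (τ / N) ^ N = qq τ := by
  rw [← qq_natCast_mul, mul_div_cancel₀ _ (NeZero.ne (N : ℂ))]

lemma qq_one_third : qq (1 / 3) = (-1 + I * Real.sqrt 3) / 2 := by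
  have harg : (2 * Real.pi * I * (1 / 3) : ℂ) = ((Real.pi - Real.pi / 3 : ℝ) : ℂ) * I := by
    push_cast
    ring
  rw [qq, harg, exp_mul_I, ← ofReal_cos, ← ofReal_sin, Real.cos_pi_sub, Real.sin_pi_sub,
    Real.cos_pi_div_three, Real.sin_pi_div_three]
  push_cast
  ring

lemma tendsto_qq : Tendsto qq I∞ (𝓝[≠] 0) :=
  (Function.Periodic.qParam_tendsto (h := 1) one_pos).congr fun τ ↦ by
    simp [Function.Periodic.qParam, qq]

end Nome

section Eisenstein

lemma E₂_eq_sigmaSeries (τ : ℂ) : E₂ τ = 1 - 24 * sigmaSeries 1 (qq τ) := rfl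

lemma E₄_eq_sigmaSeries (τ : ℂ) : E₄ τ = 1 + 240 * sigmaSeries 3 (qq τ) := rfl

lemma E₂_eq_E2 (z : ℍ) : E₂ z = EisensteinSeries.E2 z := by
  rw [EisensteinSeries.E2_eq_tsum_cexp, E₂, tsum_pnat_eq_tsum_succ (f := fun n ↦
    (ArithmeticFunction.sigma 1 n : ℂ) * cexp (2 * Real.pi * I * z) ^ n)]
  simp [sigmaC, ArithmeticFunction.sigma_apply, qq]

lemma E₄_eq_modularFormE₄ (z : ℍ) : E₄ z = ModularForm.E₄ z := by
  rw [ModularForm.E₄, EisensteinSeries.q_expansion_bernoulli _ ⟨2, rfl⟩, E₄]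
  simp only [zpow_natCast]
  rw [tsum_pnat_eq_tsum_succ (f := fun n ↦
    (ArithmeticFunction.sigma (4 - 1) n : ℂ) * cexp (2 * Real.pi * I * z) ^ n)]
  have hbernoulli : bernoulli 4 = -1 / 30 := by decide +kernel
  norm_num [sigmaC, ArithmeticFunction.sigma_apply, qq, hbernoulli]

lemma differentiableOn_E₂ : DifferentiableOn ℂ E₂ ℍₒ :=
  (UpperHalfPlane.mdifferentiable_iff.mp E2_mdifferentiable).congr fun τ hτ ↦ by
    simp [← E₂_eq_E2, ofComplex_apply_of_im_pos hτ]

lemma differentiableOn_E₄ : DifferentiableOn ℂ E₄ ℍₒ :=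
  (UpperHalfPlane.mdifferentiable_iff.mp ModularForm.E₄.holo').congr fun τ hτ ↦ by
    rw [Function.comp_apply, ofComplex_apply_of_im_pos hτ]
    exact E₄_eq_modularFormE₄ ⟨τ, hτ⟩

lemma E₂_periodic : Function.Periodic E₂ 1 := fun τ ↦ by
  rw [E₂, qq_periodic, E₂]

lemma E₄_periodic : Function.Periodic E₄ 1 := fun τ ↦ by
  rw [E₄, qq_periodic, E₄]

lemma tendsto_E₂ : Tendsto E₂ I∞ (𝓝 1) := by
  have hseries : Tendsto (fun τ ↦ sigmaSeries 1 (qq τ)) I∞ (𝓝 0) := by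
    have hcont := (hasDerivAt_sigmaSeries 1).continuousAt.tendsto
    rw [sigmaSeries_zero] at hcont
    exact hcont.comp (tendsto_nhds_of_tendsto_nhdsWithin tendsto_qq)
  simpa [← E₂_eq_sigmaSeries] using (hseries.const_mul 24).const_sub 1

lemma E₂_moebius {a b c d : ℤ} (hdet : a * d - b * c = 1) {τ : ℂ} (hτ : τ ∈ ℍₒ) :
    E₂ ((a * τ + b) / (c * τ + d)) =
      (c * τ + d) ^ 2 * E₂ τ + 6 / (Real.pi * I) * c * (c * τ + d) := by
  let γ : SL(2, ℤ) := ⟨!![a, b; c, d], by simp [Matrix.det_fin_two, hdet]⟩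
  let z : ℍ := ⟨τ, hτ⟩
  have hdenom : denom γ z = c * τ + d := by
    rw [ModularGroup.denom_apply]
    rfl
  have hne : (c * τ + d : ℂ) ≠ 0 := hdenom ▸ denom_ne_zero γ z
  have hsmul : ((γ • z : ℍ) : ℂ) = (a * τ + b) / (c * τ + d) := by
    rw [coe_specialLinearGroup_apply]
    simp [γ, z]
  have hslash : E₂ ((a * τ + b) / (c * τ + d)) * (c * τ + d) ^ (-2 : ℤ) =
      E₂ τ - 1 / (2 * riemannZeta 2) * (2 * Real.pi * I * c / (c * τ + d)) := by
    have h := congrFun (EisensteinSeries.E2_slash_action γ) z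
    simp only [ModularForm.SL_slash_apply, Pi.sub_apply, Pi.smul_apply, EisensteinSeries.D2,
      hdenom, ← E₂_eq_E2, hsmul, smul_eq_mul] at h
    exact h
  rw [zpow_neg, ← div_eq_mul_inv, div_eq_iff (zpow_ne_zero _ hne), riemannZeta_two,
    zpow_ofNat] at hslash
  have hpi : (Real.pi : ℂ) ≠ 0 := ofReal_ne_zero.mpr Real.pi_ne_zero
  rw [hslash]
  field_simp
  linear_combination (-6 * c : ℂ) * I_sq

lemma E₂_neg_inv {τ : ℂ} (hτ : τ ∈ ℍₒ) :
    E₂ (-1 / τ) = τ ^ 2 * E₂ τ + 6 / (Real.pi * I) * τ := by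
  simpa using E₂_moebius (a := 0) (b := -1) (c := 1) (d := 0) (by norm_num) hτ

open scoped ModularForm in
lemma E₄_neg_inv {τ : ℂ} (hτ : τ ∈ ℍₒ) : E₄ (-1 / τ) = τ ^ 4 * E₄ τ := by
  let z : ℍ := ⟨τ, hτ⟩
  have hslash : (⇑ModularForm.E₄ ∣[(4 : ℤ)] ModularGroup.S) z = ModularForm.E₄ z :=
    congrFun (SlashInvariantForm.slash_action_eqn ModularForm.E₄ _ ⟨ModularGroup.S, rfl⟩) z
  rw [ModularForm.SL_slash_apply, ModularGroup.denom_S, ← E₄_eq_modularFormE₄,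
    ← E₄_eq_modularFormE₄, coe_modular_S_smul, zpow_neg, ← div_eq_mul_inv,
    div_eq_iff (zpow_ne_zero _ z.ne_zero), mul_comm] at hslash
  exact hslash

end Eisenstein

section Eta

lemma η_eq_eta (τ : ℂ) : η τ = ModularForm.eta τ := by
  have hexp : cexp (Real.pi * I * τ / 12) = Function.Periodic.qParam 24 τ := by
    rw [Function.Periodic.qParam]
    congr 1
    push_cast
    ring
  simp only [η, ModularForm.eta, ModularForm.eta_q_eq_pow, hexp, qq]

lemma differentiableOn_η : DifferentiableOn ℂ η ℍₒ := fun τ hτ ↦ by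
  rw [funext η_eq_eta]
  exact (ModularForm.differentiableAt_eta_of_mem_upperHalfPlaneSet hτ).differentiableWithinAt

lemma η_ne_zero {τ : ℂ} (hτ : τ ∈ ℍₒ) : η τ ≠ 0 := by
  rw [η_eq_eta]
  exact ModularForm.eta_ne_zero hτ

lemma η_pow_eight (τ : ℂ) :
    η τ ^ 8 = qq (τ / 3) * (∏' n : ℕ, (1 - qq τ ^ (n + 1))) ^ 8 := by
  rw [η, mul_pow, ← exp_nat_mul, qq]
  congr 2
  push_cast
  ring

lemma η_add_natCast_pow_eight (τ : ℂ) (n : ℕ) : η (τ + n) ^ 8 = qq (1 / 3) ^ n * η τ ^ 8 := by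
  have hqq : qq (τ + n) = qq τ := by simpa using qq_periodic.nat_mul n τ
  have hqq' : qq ((τ + n) / 3) = qq (1 / 3) ^ n * qq (τ / 3) := by
    rw [← qq_natCast_mul, ← qq_add]
    ring_nf
  rw [η_pow_eight, η_pow_eight, hqq, hqq', mul_assoc]

lemma η_neg_inv_pow_eight {τ : ℂ} (hτ : τ ∈ ℍₒ) : η (-1 / τ) ^ 8 = τ ^ 4 * η τ ^ 8 := by
  have hsqrt {w : ℂ} (hw : w ≠ 0) : Complex.sqrt w ^ 8 = w ^ 4 := by
    have hsq : Complex.sqrt w ^ 2 = w := by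
      rw [sqrt_eq_exp hw, ← exp_nat_mul, Nat.cast_two, mul_div_cancel₀ _ two_ne_zero, exp_log hw]
    rw [show 8 = 2 * 4 from rfl, pow_mul, hsq]
  have heta := ModularForm.eta_comp_eq_csqrt_I_inv hτ
  simp only [Function.comp_apply, Pi.smul_apply, Pi.mul_apply, smul_eq_mul] at heta
  rw [η_eq_eta, η_eq_eta, heta, mul_pow, mul_pow, inv_pow, hsqrt I_ne_zero,
    hsqrt (ne_zero_of_mem_upperHalfPlaneSet hτ), I_pow_four, inv_one, one_mul]

end Eta

section HeckeCosets

variable (N : ℕ)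

/-- The summand `N⁻¹ E₂((τ + m) / N)` of the `N`-th Hecke operator on `E₂`, made modular by
subtracting `E₂(τ)`. The index is a residue class since the summand depends on `m` modulo `N`. -/
noncomputable def cosetE₂ (m : ZMod N) (τ : ℂ) : ℂ := E₂ ((τ + m.val) / N) / N - E₂ τ

/-- The summand `N E₂(Nτ)` of the `N`-th Hecke operator on `E₂`, made modular by
subtracting `E₂(τ)`. -/
noncomputable def cosetE₂Infty (τ : ℂ) : ℂ := N * E₂ (N * τ) - E₂ τ

lemma cosetE₂Infty_periodic : Function.Periodic (cosetE₂Infty N) 1 := fun τ ↦ by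
  rw [cosetE₂Infty, mul_add, E₂_periodic.nat_mul, E₂_periodic, cosetE₂Infty]

variable {N} [NeZero N]

lemma cosetE₂_intCast (m : ℤ) (τ : ℂ) :
    cosetE₂ N m τ = E₂ ((τ + m) / N) / N - E₂ τ := by
  have hN : (N : ℂ) ≠ 0 := NeZero.ne _
  have hval : ((m : ZMod N).val : ℤ) = m % N := ZMod.val_intCast m
  have hm : (m : ℂ) = (m : ZMod N).val + (m / N : ℤ) * N := by
    rw [← Int.cast_natCast (m : ZMod N).val, hval]
    exact_mod_cast (Int.emod_add_ediv_mul m N).symm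
  have harg : (τ + m) / N = (τ + (m : ZMod N).val) / N + (m / N : ℤ) * 1 := by
    rw [hm]
    field_simp
    ring
  rw [cosetE₂, harg, E₂_periodic.int_mul]

lemma cosetE₂_add_natCast (m : ZMod N) (n : ℕ) (τ : ℂ) :
    cosetE₂ N m (τ + n) = cosetE₂ N (m + n) τ := by
  obtain ⟨m, rfl⟩ := ZMod.intCast_surjective m
  have hE₂ : E₂ (τ + n) = E₂ τ := by simpa using E₂_periodic.nat_mul n τ
  rw [show (m + n : ZMod N) = (m + n : ℤ) by push_cast; rfl, cosetE₂_intCast, cosetE₂_intCast, hE₂]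
  push_cast
  ring_nf

lemma cosetE₂_neg_inv {m m' : ZMod N} (hm : m * m' = -1) {τ : ℂ} (hτ : τ ∈ ℍₒ) :
    cosetE₂ N m (-1 / τ) = τ ^ 2 * cosetE₂ N m' τ := by
  obtain ⟨a, rfl⟩ := ZMod.intCast_surjective m
  obtain ⟨d, rfl⟩ := ZMod.intCast_surjective m'
  obtain ⟨b, hb⟩ : (N : ℤ) ∣ a * d + 1 := by
    rw [← ZMod.intCast_zmod_eq_zero_iff_dvd]
    push_cast
    rw [hm, neg_add_cancel]
  have hN : (N : ℂ) ≠ 0 := NeZero.ne _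
  have hτ0 := ne_zero_of_mem_upperHalfPlaneSet hτ
  have hbC : (a * d + 1 : ℂ) = N * b := by exact_mod_cast hb
  have hmem : (τ + d) / N ∈ ℍₒ := add_div_natCast_mem_upperHalfPlaneSet hτ d N
  have hmoebius := E₂_moebius (a := a) (b := -b) (c := N) (d := -d) (by linear_combination -hb) hmem
  have hden : ((N : ℤ) : ℂ) * ((τ + d) / N) + (-d : ℤ) = τ := by
    push_cast
    field_simp
    ring
  have hnum : (a * ((τ + d) / N) + (-b : ℤ)) / τ = (-1 / τ + a) / N := by
    push_cast
    field_simp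
    linear_combination hbC
  rw [hden, hnum] at hmoebius
  rw [cosetE₂_intCast, cosetE₂_intCast, hmoebius, E₂_neg_inv hτ]
  push_cast
  field_simp
  ring

variable (N) in
lemma cosetE₂_zero_neg_inv {τ : ℂ} (hτ : τ ∈ ℍₒ) :
    cosetE₂ N 0 (-1 / τ) = τ ^ 2 * cosetE₂Infty N τ := by
  have hN : (N : ℂ) ≠ 0 := NeZero.ne _
  have hτ0 := ne_zero_of_mem_upperHalfPlaneSet hτ
  have hmem : (N : ℂ) * τ ∈ ℍₒ :=
    real_mul_mem_upperHalfPlaneSet hτ (Nat.cast_pos'.mpr (NeZero.pos N))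
  have harg : (-1 / τ + ((0 : ZMod N).val : ℕ)) / N = -1 / (N * τ) := by
    rw [ZMod.val_zero, Nat.cast_zero, add_zero, div_div, mul_comm]
  rw [cosetE₂, harg, E₂_neg_inv hmem, E₂_neg_inv hτ, cosetE₂Infty]
  field_simp
  ring

variable (N) in
lemma cosetE₂Infty_neg_inv {τ : ℂ} (hτ : τ ∈ ℍₒ) :
    cosetE₂Infty N (-1 / τ) = τ ^ 2 * cosetE₂ N 0 τ := by
  have hτ0 := ne_zero_of_mem_upperHalfPlaneSet hτ
  have hswap := cosetE₂_zero_neg_inv N (neg_one_div_mem_upperHalfPlaneSet hτ)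
  rw [show -1 / (-1 / τ) = τ by field_simp] at hswap
  rw [hswap]
  field_simp

lemma differentiableOn_cosetE₂ (m : ZMod N) : DifferentiableOn ℂ (cosetE₂ N m) ℍₒ :=
  ((differentiableOn_E₂.comp (by fun_prop) fun _ hτ ↦
    add_div_natCast_mem_upperHalfPlaneSet hτ m.val N).div_const _).sub differentiableOn_E₂

variable (N) in
lemma differentiableOn_cosetE₂Infty : DifferentiableOn ℂ (cosetE₂Infty N) ℍₒ :=
  ((differentiableOn_E₂.comp (by fun_prop) fun _ hτ ↦ real_mul_mem_upperHalfPlaneSet hτ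
    (Nat.cast_pos'.mpr (NeZero.pos N))).const_mul _).sub differentiableOn_E₂

lemma tendsto_cosetE₂ (m : ZMod N) : Tendsto (cosetE₂ N m) I∞ (𝓝 (1 / N - 1)) :=
  ((tendsto_E₂.comp (tendsto_add_div_natCast_comap_im_atTop m.val N)).div_const _).sub tendsto_E₂

variable (N) in
lemma tendsto_cosetE₂Infty : Tendsto (cosetE₂Infty N) I∞ (𝓝 (N - 1)) := by
  have hlim := tendsto_E₂.comp
    (tendsto_real_mul_comap_im_atTop (Nat.cast_pos'.mpr (NeZero.pos N) : (0 : ℝ) < N))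
  simpa [← cosetE₂Infty.eq_1] using (hlim.const_mul (N : ℂ)).sub tendsto_E₂

/- The left-hand side is `T_p E₂ - (p + 1) E₂`; it has level one and weight two, and it vanishes
at `i∞`. -/
theorem cosetE₂Infty_add_sum_cosetE₂ {p : ℕ} [Fact p.Prime] {τ : ℂ} (hτ : τ ∈ ℍₒ) :
    cosetE₂Infty p τ + ∑ m, cosetE₂ p m τ = 0 := by
  refine eq_zero_of_levelOne_of_weight_lt_twelve (k := 2)
    (f := fun τ ↦ cosetE₂Infty p τ + ∑ m, cosetE₂ p m τ) (by norm_num)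
    ((differentiableOn_cosetE₂Infty p).add (.fun_sum fun m _ ↦ differentiableOn_cosetE₂ m))
    (fun τ _ ↦ ?_) (fun τ hτ ↦ ?_) ?_ τ hτ
  · have hshift (m : ZMod p) : cosetE₂ p m (τ + 1) = cosetE₂ p (m + 1) τ := by
      simpa using cosetE₂_add_natCast m 1 τ
    simp only [cosetE₂Infty_periodic p τ, hshift]
    exact congrArg _ (Fintype.sum_equiv (Equiv.addRight (1 : ZMod p)) _ (cosetE₂ p · τ) fun _ ↦ rfl)
  · have hsum : ∑ m ∈ {0}ᶜ, cosetE₂ p m (-1 / τ) = τ ^ 2 * ∑ m ∈ {0}ᶜ, cosetE₂ p m τ := by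
      rw [mul_sum]
      refine sum_bij' (fun m _ ↦ -m⁻¹) (fun m _ ↦ -m⁻¹) (by simp) (by simp) (by simp) (by simp)
        fun m hm ↦ cosetE₂_neg_inv ?_ hτ
      rw [mul_neg, mul_inv_cancel₀ (by simpa using hm)]
    simp only [Fintype.sum_eq_add_sum_compl (0 : ZMod p), cosetE₂Infty_neg_inv p hτ,
      cosetE₂_zero_neg_inv p hτ, hsum, zpow_ofNat]
    ring
  · have hp : (p : ℂ) ≠ 0 := NeZero.ne _
    have hlim := (tendsto_cosetE₂Infty p).add
      (tendsto_finsetSum univ fun (m : ZMod p) _ ↦ tendsto_cosetE₂ m)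
    have hval : (p : ℂ) - 1 + ∑ _m : ZMod p, (1 / (p : ℂ) - 1) = 0 := by
      rw [sum_const, card_univ, ZMod.card, nsmul_eq_mul]
      field_simp
      ring
    rwa [hval] at hlim

end HeckeCosets

section CubicForms

lemma g₁_eq_cosetE₂ (j : ℕ) {τ : ℂ} (hτ : τ ∈ ℍₒ) :
    g₁ j τ = 3 / 4 * (cosetE₂Infty 3 τ + cosetE₂ 3 j τ) := by
  have hfilter : {m ∈ range 3 | m % 3 = j % 3} = {j % 3} := by
    ext m
    simp only [mem_filter, mem_range, mem_singleton]
    omega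
  have hrange : ∑ m : ZMod 3, E₂ ((τ + m.val) / 3) = ∑ m ∈ range 3, E₂ ((τ + m) / 3) :=
    Fin.sum_univ_eq_sum_range (fun m ↦ E₂ ((τ + m) / 3)) 3
  have hcompl := sum_filter_add_sum_filter_not (range 3) (· % 3 = j % 3) fun m ↦ E₂ ((τ + m) / 3)
  rw [hfilter, sum_singleton, ← hrange] at hcompl
  have hecke := cosetE₂Infty_add_sum_cosetE₂ (p := 3) hτ
  simp only [cosetE₂, cosetE₂Infty, sum_sub_distrib, ← sum_div, sum_const, card_univ, ZMod.card,
    nsmul_eq_mul, Nat.cast_ofNat] at hecke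
  rw [g₁, cosetE₂, cosetE₂Infty, ZMod.val_natCast, Nat.cast_ofNat]
  linear_combination (-1 / 4) * hcompl - 3 / 4 * hecke

lemma g₁_add_natCast (j n : ℕ) {τ : ℂ} (hτ : τ ∈ ℍₒ) : g₁ j (τ + n) = g₁ (j + n) τ := by
  have hmem : τ + n ∈ ℍₒ := add_real_mem_upperHalfPlaneSet hτ n
  have hInfty : cosetE₂Infty 3 (τ + n) = cosetE₂Infty 3 τ := by
    simpa using (cosetE₂Infty_periodic 3).nat_mul n τ
  rw [g₁_eq_cosetE₂ j hmem, g₁_eq_cosetE₂ _ hτ, hInfty, cosetE₂_add_natCast, Nat.cast_add]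

lemma g₁_neg_inv_sq (j : ℕ) {τ : ℂ} (hτ : τ ∈ ℍₒ) :
    g₁ j (-1 / τ) ^ 2 = τ ^ 4 * g₁ j τ ^ 2 := by
  have hecke : cosetE₂Infty 3 τ + (cosetE₂ 3 0 τ + cosetE₂ 3 1 τ + cosetE₂ 3 2 τ) = 0 := by
    rw [← cosetE₂Infty_add_sum_cosetE₂ (p := 3) hτ]
    exact congrArg _ (Fin.sum_univ_three (cosetE₂ 3 · τ)).symm
  rw [g₁_eq_cosetE₂ j (neg_one_div_mem_upperHalfPlaneSet hτ), g₁_eq_cosetE₂ j hτ,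
    cosetE₂Infty_neg_inv 3 hτ]
  obtain hj | hj | hj : (j : ZMod 3) = 0 ∨ (j : ZMod 3) = 1 ∨ (j : ZMod 3) = 2 := by
    generalize (j : ZMod 3) = m
    revert m
    decide
  · rw [hj, cosetE₂_zero_neg_inv 3 hτ]
    ring
  · rw [hj, cosetE₂_neg_inv (m' := 2) (by decide) hτ, eq_neg_of_add_eq_zero_left hecke]
    ring
  · rw [hj, cosetE₂_neg_inv (m' := 1) (by decide) hτ, eq_neg_of_add_eq_zero_left hecke]
    ring

lemma differentiableOn_g₁ (j : ℕ) : DifferentiableOn ℂ (g₁ j) ℍₒ :=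
  (((differentiableOn_cosetE₂Infty 3).add (differentiableOn_cosetE₂ _)).const_mul _).congr
    fun _ ↦ g₁_eq_cosetE₂ j

/-- The quotient `(g_{1,0}² - E₄) / η⁸`. Its translates `τ ↦ cubicRatio (τ + j)` are the quotients
`ρ⁻ʲ (g_{1,j}² - E₄) / η⁸`, so the identity for all `j` says that it is constant. -/
noncomputable def cubicRatio (τ : ℂ) : ℂ := (g₁ 0 τ ^ 2 - E₄ τ) / η τ ^ 8

lemma cubicRatio_add_natCast (n : ℕ) {τ : ℂ} (hτ : τ ∈ ℍₒ) :
    cubicRatio (τ + n) = (g₁ n τ ^ 2 - E₄ τ) / (qq (1 / 3) ^ n * η τ ^ 8) := by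
  have hE₄ : E₄ (τ + n) = E₄ τ := by simpa using E₄_periodic.nat_mul n τ
  rw [cubicRatio, g₁_add_natCast 0 n hτ, zero_add, hE₄, η_add_natCast_pow_eight]

lemma cubicRatio_add_three {τ : ℂ} (hτ : τ ∈ ℍₒ) : cubicRatio (τ + (3 : ℕ)) = cubicRatio τ := by
  have hg₁ : g₁ 3 τ = g₁ 0 τ := rfl
  have hρ : qq (1 / 3) ^ 3 = 1 := by
    rw [show qq (1 / 3) ^ 3 = qq 1 from qq_div_natCast_pow 3 1, qq, mul_one, exp_two_pi_mul_I]
  rw [cubicRatio_add_natCast 3 hτ, hg₁, hρ, one_mul, cubicRatio]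

lemma cubicRatio_neg_inv_add_natCast (n : ℕ) {τ : ℂ} (hτ : τ ∈ ℍₒ) :
    cubicRatio (-1 / τ + n) = cubicRatio (τ + n) := by
  have hτ4 : τ ^ 4 ≠ 0 := pow_ne_zero 4 (ne_zero_of_mem_upperHalfPlaneSet hτ)
  rw [cubicRatio_add_natCast n (neg_one_div_mem_upperHalfPlaneSet hτ), cubicRatio_add_natCast n hτ,
    g₁_neg_inv_sq n hτ, E₄_neg_inv hτ, η_neg_inv_pow_eight hτ, ← mul_sub, mul_left_comm,
    mul_div_mul_left _ _ hτ4]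

lemma differentiableOn_cubicRatio : DifferentiableOn ℂ cubicRatio ℍₒ :=
  (((differentiableOn_g₁ 0).fun_pow 2).sub differentiableOn_E₄).div (differentiableOn_η.fun_pow 8)
    fun _ hτ ↦ pow_ne_zero 8 (η_ne_zero hτ)

lemma g₁_zero_eq_sigmaSeries {τ : ℂ} (hτ : τ ∈ ℍₒ) :
    g₁ 0 τ = 1 - 54 * sigmaSeries 1 (qq (τ / 3) ^ 9) + 36 * sigmaSeries 1 (qq (τ / 3) ^ 3) -
      6 * sigmaSeries 1 (qq (τ / 3)) := by
  have hqq : qq (τ / 3) ^ 3 = qq τ := qq_div_natCast_pow 3 τ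
  have hqq' : qq (τ / 3) ^ 9 = qq ((3 : ℕ) * τ) := by
    rw [qq_natCast_mul, ← hqq, ← pow_mul]
  rw [g₁_eq_cosetE₂ 0 hτ, hqq, hqq', cosetE₂, cosetE₂Infty, Nat.cast_zero, ZMod.val_zero,
    Nat.cast_zero, add_zero]
  simp only [E₂_eq_sigmaSeries, Nat.cast_ofNat]
  ring

lemma hasDerivAt_sigmaSeries_pow (k : ℕ) {n : ℕ} (hn : 1 < n) :
    HasDerivAt (fun q ↦ sigmaSeries k (q ^ n)) 0 0 := by
  have hn' : n ≠ 0 := by omega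
  have hpow : HasDerivAt (fun q : ℂ ↦ q ^ n) 0 0 := by
    simpa [show n - 1 ≠ 0 by omega] using hasDerivAt_pow n (0 : ℂ)
  simpa [Function.comp_def] using (hasDerivAt_sigmaSeries k).comp_of_eq 0 hpow (zero_pow hn').symm

lemma tendsto_qq_div_three : Tendsto (fun τ ↦ qq (τ / 3)) I∞ (𝓝[≠] 0) := by
  simpa [Function.comp_def] using tendsto_qq.comp (tendsto_add_div_natCast_comap_im_atTop 0 3)

lemma tendsto_g₁_zero_sq_sub_E₄_div :
    Tendsto (fun τ ↦ (g₁ 0 τ ^ 2 - E₄ τ) / qq (τ / 3)) I∞ (𝓝 (-12)) := by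
  let Φ (t : ℂ) : ℂ :=
    (1 - 54 * sigmaSeries 1 (t ^ 9) + 36 * sigmaSeries 1 (t ^ 3) - 6 * sigmaSeries 1 t) ^ 2 -
      (1 + 240 * sigmaSeries 3 (t ^ 3))
  have hΦ0 : Φ 0 = 0 := by simp [Φ, sigmaSeries_zero]
  have hΦ : HasDerivAt Φ (-12) 0 := by
    have h3 (k : ℕ) := hasDerivAt_sigmaSeries_pow k (show 1 < 3 by norm_num)
    have h9 (k : ℕ) := hasDerivAt_sigmaSeries_pow k (show 1 < 9 by norm_num)
    have hsq := ((((h9 1).const_mul 54).const_sub 1 |>.fun_add ((h3 1).const_mul 36)).fun_sub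
      ((hasDerivAt_sigmaSeries 1).const_mul 6)).fun_pow 2
    exact (hsq.fun_sub (((h3 3).const_mul 240).const_add 1)).congr_deriv
      (by norm_num [sigmaSeries_zero])
  have hslope : Tendsto (fun t ↦ Φ t / t) (𝓝[≠] 0) (𝓝 (-12)) := by
    simpa [hΦ0, inv_mul_eq_div] using hΦ.tendsto_slope_zero
  refine (hslope.comp tendsto_qq_div_three).congr' ?_
  filter_upwards [eventually_mem_upperHalfPlaneSet] with τ hτ
  have hqq : qq (τ / 3) ^ 3 = qq τ := qq_div_natCast_pow 3 τ
  simp only [Function.comp_apply, Φ, g₁_zero_eq_sigmaSeries hτ, E₄_eq_sigmaSeries, hqq]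

lemma tendsto_η_pow_eight_div : Tendsto (fun τ ↦ η τ ^ 8 / qq (τ / 3)) I∞ (𝓝 1) := by
  have hcont : ContinuousAt (fun q : ℂ ↦ ∏' n : ℕ, (1 - q ^ (n + 1))) 0 :=
    (ModularForm.differentiableOn_tprod_one_sub_pow.differentiableAt
      (Metric.ball_mem_nhds 0 one_pos)).continuousAt
  have hlim := (hcont.tendsto.comp (tendsto_nhds_of_tendsto_nhdsWithin tendsto_qq)).pow 8
  simp only [zero_pow (Nat.succ_ne_zero _), sub_zero, tprod_one, one_pow] at hlim
  refine hlim.congr fun τ ↦ ?_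
  rw [η_pow_eight, mul_div_cancel_left₀ _ (qq_ne_zero _), Function.comp_apply]

lemma tendsto_cubicRatio : Tendsto cubicRatio I∞ (𝓝 (-12)) := by
  have hlim := tendsto_g₁_zero_sq_sub_E₄_div.div tendsto_η_pow_eight_div one_ne_zero
  rw [div_one] at hlim
  exact hlim.congr fun τ ↦ div_div_div_cancel_right₀ (qq_ne_zero _) _ _

theorem cubicRatio_eq {τ : ℂ} (hτ : τ ∈ ℍₒ) : cubicRatio τ = -12 :=
  eq_of_tendsto_of_translates_neg_inv three_ne_zero differentiableOn_cubicRatio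
    (fun _ ↦ cubicRatio_add_three) (fun n _ ↦ cubicRatio_neg_inv_add_natCast n)
    tendsto_cubicRatio τ hτ

end CubicForms

theorem stmt4_general (j : ℕ) (τ : ℂ) (hτ : 0 < τ.im) :
    g₁ j τ ^ 2 = E₄ τ - 12 * ((-1 + Complex.I * Real.sqrt 3) / 2) ^ j * η τ ^ 8 := by
  have hconst : (g₁ j τ ^ 2 - E₄ τ) / (qq (1 / 3) ^ j * η τ ^ 8) = -12 := by
    rw [← cubicRatio_add_natCast j hτ]
    exact cubicRatio_eq (add_real_mem_upperHalfPlaneSet hτ j)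
  have hne : qq (1 / 3) ^ j * η τ ^ 8 ≠ 0 :=
    mul_ne_zero (pow_ne_zero j (qq_ne_zero _)) (pow_ne_zero 8 (η_ne_zero hτ))
  rw [div_eq_iff hne] at hconst
  rw [← qq_one_third]
  linear_combination hconst

theorem stmt4 (j : ℕ) (hj : j < 3) (τ : ℂ) (hτ : 0 < τ.im) :
    g₁ j τ ^ 2 = E₄ τ - 12 * ((-1 + Complex.I * Real.sqrt 3) / 2) ^ j * η τ ^ 8 :=
  stmt4_general j τ hτ
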